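/- Let A generate an α-times resolvent family {S_α(t)}_{t≥0} on X, where 1 < α < 2, and let r > 0. If S_α(·) is of bounded semivariation on [0,r], then for every x, y ∈ D(A) and every continuous f : [0,r] → X, the function u(t) = S_α(t)x + ∫_0^t S_α(s)y ds + (P_α*f)(t) is a strong solution of D_t^α u = Au + f on [0,r] with u(0) = x, u'(0) = y. -/

import Mathlib

open MeasureTheory Set

/-- `g β t = t^(β-1)/Γ(β)`. -/
noncomputable def g (β t : ℝ) : ℝ := t ^ (β - 1) / Real.Gamma β

/-- `Pa α S t x = (g_{α-1} * S)(t) x = ∫_0^t g_{α-1}(t-s) S(s) x ds`. -/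
noncomputable def Pa {X : Type*} [NormedAddCommGroup X] [NormedSpace ℂ X]
    (α : ℝ) (S : ℝ → X →L[ℂ] X) (t : ℝ) (x : X) : X :=
  ∫ s in (0:ℝ)..t, g (α - 1) (t - s) • S s x

/-- `G` is of bounded semivariation on `[0, r]`: the quantities
`‖∑ (G(d_{i+1}) - G(d_i)) x_i‖` over all partitions `0 = d_0 < ⋯ < d_n = r`
and all vectors of norm at most one are uniformly bounded. -/
def BoundedSemivariation {X : Type*} [NormedAddCommGroup X] [NormedSpace ℂ X]
    (G : ℝ → X →L[ℂ] X) (r : ℝ) : Prop :=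
  ∃ C : ℝ, ∀ (n : ℕ) (d : ℕ → ℝ) (x : ℕ → X),
    d 0 = 0 → d n = r → (∀ i < n, d i < d (i + 1)) → (∀ i, ‖x i‖ ≤ 1) →
    ‖∑ i ∈ Finset.range n, (G (d (i + 1)) - G (d i)) (x i)‖ ≤ C

/-- `u` is a strong solution of `D_t^α u = A u + f` on `[0, r]`, `u 0 = x`, `u' 0 = y`:
`u` takes values in `D(A)` with `t ↦ A u t` continuous (encoded via the graph of `A`),
`u` is continuously differentiable on `[0, r]`,
`w t = ∫_0^t g_{2-α}(t-s) (u s - x - s y) ds` is twice continuously differentiable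
on `[0, r]`, and `w'' t = A (u t) + f t` there. -/
def IsStrongSolution {X : Type*} [NormedAddCommGroup X] [NormedSpace ℂ X]
    (α : ℝ) (A : X →ₗ.[ℂ] X) (r : ℝ) (f : ℝ → X) (x y : X) (u : ℝ → X) : Prop :=
  ∃ Au u' w' w'' : ℝ → X,
    ContinuousOn u (Set.Icc 0 r) ∧
    (∀ t ∈ Set.Icc (0:ℝ) r, (u t, Au t) ∈ A.graph) ∧
    ContinuousOn Au (Set.Icc 0 r) ∧
    (∀ t ∈ Set.Icc (0:ℝ) r, HasDerivWithinAt u (u' t) (Set.Icc 0 r) t) ∧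
    ContinuousOn u' (Set.Icc 0 r) ∧
    (∀ t ∈ Set.Icc (0:ℝ) r,
      HasDerivWithinAt (fun τ => ∫ s in (0:ℝ)..τ, g (2 - α) (τ - s) • (u s - x - s • y))
        (w' t) (Set.Icc 0 r) t) ∧
    (∀ t ∈ Set.Icc (0:ℝ) r, HasDerivWithinAt w' (w'' t) (Set.Icc 0 r) t) ∧
    ContinuousOn w'' (Set.Icc 0 r) ∧
    (∀ t ∈ Set.Icc (0:ℝ) r, w'' t = Au t + f t) ∧
    u 0 = x ∧ u' 0 = y

open Filter Topology Function

/-!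
Write `J^β φ = g_β * φ` for the Riemann–Liouville integral. The theorem reduces to showing that
`S * f` has a continuous derivative `k`. For `f` of class `C¹` the derivative is
`S(t) f(0) + (S * f')(t)`, the limit of the sums
`S(t) f(0) + ∑ S(dᵢ₊₁) (f(t - dᵢ) - f(t - dᵢ₊₁))`. Summation by parts turns these into
`S(0) f(t) + ∑ (S(dᵢ₊₁) - S(dᵢ)) f(t - dᵢ)`, so bounded semivariation bounds the derivative by a
constant times `sup ‖f‖`, and the case of continuous `f` follows by uniform approximation.

Then `P_α * f = J^(α-1) (S * f) = J^α k`. By density of `D(A)` and closedness of `A`, the resolvent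
equation extends to `A (J^α S z) = S z - z` for every `z`; convolving it with `f` gives
`A (J^α (S * f)) = S * f - J^1 f`, and differentiating yields `A (J^α k) = k - f`. Altogether
`u(t) = x + t y + (J^α ψ)(t)` and `A u = ψ - f` with `ψ = S A x + J^1 (S A y) + k`, from which the
derivatives in the definition of a strong solution can be read off, since `J^(2-α) J^α ψ = J^2 ψ`.
-/

section Kernel

variable {a b : ℝ}

lemma g_one (t : ℝ) : g 1 t = 1 := by simp [g]

lemma intervalIntegrable_g (hb : 0 < b) (s t : ℝ) : IntervalIntegrable (g b) volume s t :=
  (intervalIntegral.intervalIntegrable_rpow' (by linarith)).div_const _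

lemma integral_rpow_mul_sub_rpow (ha : 0 < a) (hb : 0 < b) {t : ℝ} (ht : 0 < t) :
    ∫ s in (0:ℝ)..t, s ^ (a - 1) * (t - s) ^ (b - 1) =
      t ^ (a + b - 1) * (Real.Gamma a * Real.Gamma b / Real.Gamma (a + b)) := by
  have complex_beta := Complex.betaIntegral_scaled (a : ℂ) (b : ℂ) ht
  rw [Complex.betaIntegral_eq_Gamma_mul_div _ _ (by simpa) (by simpa)] at complex_beta
  apply Complex.ofReal_injective
  push_cast [← intervalIntegral.integral_ofReal, Complex.ofReal_cpow ht.le,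
    ← Complex.Gamma_ofReal]
  rw [← complex_beta]
  refine intervalIntegral.integral_congr fun s hs => ?_
  rw [uIcc_of_le ht.le] at hs
  push_cast [Complex.ofReal_cpow hs.1, Complex.ofReal_cpow (sub_nonneg.2 hs.2)]
  rfl

lemma integral_g_mul_g (ha : 0 < a) (hb : 0 < b) {σ t : ℝ} (hσt : σ < t) :
    ∫ s in σ..t, g a (t - s) * g b (s - σ) = g (a + b) (t - σ) := by
  have hΓ := (Real.Gamma_pos_of_pos ha).ne'
  have hΓ' := (Real.Gamma_pos_of_pos hb).ne'
  calc ∫ s in σ..t, g a (t - s) * g b (s - σ)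
      = ∫ s in σ..t, (fun τ => τ ^ (b - 1) * (t - σ - τ) ^ (a - 1)) (s - σ) /
          (Real.Gamma b * Real.Gamma a) := by
        congr 1 with s
        simp only [g, sub_sub_sub_cancel_right]
        field_simp
    _ = (t - σ) ^ (b + a - 1) * (Real.Gamma b * Real.Gamma a / Real.Gamma (b + a)) /
          (Real.Gamma b * Real.Gamma a) := by
        rw [intervalIntegral.integral_div, intervalIntegral.integral_comp_sub_right
          (fun τ => τ ^ (b - 1) * (t - σ - τ) ^ (a - 1)) σ, sub_self,
          integral_rpow_mul_sub_rpow hb ha (sub_pos.2 hσt)]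
    _ = g (a + b) (t - σ) := by
        rw [g, add_comm b a]
        field_simp

end Kernel

section Triangle

variable {E : Type*} [NormedAddCommGroup E] [NormedSpace ℝ E]

/-- The closed triangle `0 ≤ σ ≤ s ≤ t` of pairs `(s, σ)`, the domain of integration of the
iterated convolutions on `[0, t]`. -/
def triangle (t : ℝ) : Set (ℝ × ℝ) := {p | 0 ≤ p.2 ∧ p.2 ≤ p.1 ∧ p.1 ≤ t}

lemma isCompact_triangle (t : ℝ) : IsCompact (triangle t) := by
  have closed : IsClosed (triangle t) :=
    (isClosed_le continuous_const continuous_snd).inter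
      ((isClosed_le continuous_snd continuous_fst).inter
        (isClosed_le continuous_fst continuous_const))
  exact (isCompact_Icc.prod isCompact_Icc).of_isClosed_subset (s := Icc 0 t ×ˢ Icc 0 t) closed
    fun p hp => ⟨⟨hp.1.trans hp.2.1, hp.2.2⟩, hp.1, hp.2.1.trans hp.2.2⟩

lemma integral_integral_swap_triangle {t : ℝ} (ht : 0 ≤ t) {K : ℝ → ℝ → E}
    (hK : IntegrableOn (uncurry K) (triangle t)) :
    ∫ s in (0:ℝ)..t, ∫ σ in (0:ℝ)..s, K s σ = ∫ σ in (0:ℝ)..t, ∫ s in σ..t, K s σ := by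
  let K' : ℝ → ℝ → E := curry ((triangle t).indicator (uncurry K))
  have swap : ∫ s in (0:ℝ)..t, ∫ σ in (0:ℝ)..t, K' s σ =
      ∫ σ in (0:ℝ)..t, ∫ s in (0:ℝ)..t, K' s σ :=
    intervalIntegral_intervalIntegral_swap
      (hK.integrable_indicator (isCompact_triangle t).measurableSet).integrableOn
  convert swap using 1
  · refine intervalIntegral.integral_congr fun s hs => ?_
    rw [uIcc_of_le ht] at hs
    rw [← intervalIntegral.integral_indicator hs]
    refine intervalIntegral.integral_congr fun σ hσ => ?_
    rw [uIcc_of_le ht] at hσ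
    simp [K', indicator, triangle, hσ.1, hs.2]
  · refine intervalIntegral.integral_congr fun σ hσ => ?_
    rw [uIcc_of_le ht] at hσ
    have Icc_inter : Icc 0 t ∩ Ici σ = Icc σ t := by
      rw [← Ici_inter_Iic, inter_right_comm, Ici_inter_Ici, sup_of_le_right hσ.1, Ici_inter_Iic]
    rw [intervalIntegral.integral_of_le hσ.2, intervalIntegral.integral_of_le ht,
      ← integral_Icc_eq_integral_Ioc, ← integral_Icc_eq_integral_Ioc, ← Icc_inter,
      ← setIntegral_indicator measurableSet_Ici]
    refine setIntegral_congr_fun measurableSet_Icc fun s hs => ?_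
    simp [K', indicator, triangle, hσ.1, hs.2]

lemma integrableOn_triangle {t : ℝ} (ht : 0 ≤ t) {c d : ℝ → ℝ}
    (hc : IntervalIntegrable c volume 0 t) (hd : IntervalIntegrable d volume 0 t)
    {H : ℝ → ℝ → E} (hH : ContinuousOn (uncurry H) (triangle t)) :
    IntegrableOn (uncurry fun s σ => (c (t - s) * d (s - σ)) • H s σ) (triangle t) := by
  have integrable_indicator : ∀ {φ : ℝ → ℝ}, IntervalIntegrable φ volume 0 t →
      Integrable ((Icc 0 t).indicator φ) := fun hφ =>
    ((intervalIntegrable_iff_integrableOn_Icc_of_le ht).1 hφ).integrable_indicator measurableSet_Icc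
  have scalar := (((integrable_indicator hc).comp_sub_left t).convolution_integrand
    (ContinuousLinearMap.mul ℝ ℝ) (integrable_indicator hd).comp_neg).swap.integrableOn
    (s := triangle t)
  refine IntegrableOn.smul_continuousOn
    (scalar.congr_fun ?_ (isCompact_triangle t).measurableSet) hH (isCompact_triangle t)
  rintro ⟨s, σ⟩ ⟨hσ, hσs, hst⟩
  have hs : t - s ∈ Icc 0 t := ⟨by linarith, by linarith⟩
  have hsσ : s - σ ∈ Icc 0 t := ⟨by linarith, by linarith⟩
  simp [hs, hsσ]

lemma integral_integral_swap_of_continuousOn_triangle {t : ℝ} (ht : 0 ≤ t) {c d : ℝ → ℝ}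
    (hc : IntervalIntegrable c volume 0 t) (hd : IntervalIntegrable d volume 0 t)
    {H : ℝ → ℝ → E} (hH : ContinuousOn (uncurry H) (triangle t)) :
    ∫ s in (0:ℝ)..t, ∫ σ in (0:ℝ)..s, (c (t - s) * d (s - σ)) • H s σ =
      ∫ σ in (0:ℝ)..t, ∫ s in σ..t, (c (t - s) * d (s - σ)) • H s σ :=
  integral_integral_swap_triangle ht (integrableOn_triangle ht hc hd hH)

lemma continuousWithinAt_indicator_Iic {Y : Type*} [TopologicalSpace Y] [Zero Y] {I : Set ℝ}
    {K : ℝ → ℝ → Y} {s t₀ : ℝ} (hne : s ≠ t₀)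
    (hK : s < t₀ → ContinuousWithinAt (fun t => K t s) (I ∩ Ici s) t₀) :
    ContinuousWithinAt (fun t => (Iic t).indicator (K t) s) I t₀ := by
  rcases hne.lt_or_gt with hlt | hgt
  · refine ((continuousWithinAt_inter (Ici_mem_nhds hlt)).1 (hK hlt)).congr_of_eventuallyEq ?_
      (indicator_of_mem (mem_Iic.2 hlt.le) _)
    filter_upwards [nhdsWithin_le_nhds (Ici_mem_nhds hlt)] with t hst
    exact indicator_of_mem (mem_Iic.2 hst) _
  · refine (continuousWithinAt_const (b := (0 : Y))).congr_of_eventuallyEq ?_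
      (indicator_of_notMem (notMem_Iic.2 hgt) _)
    filter_upwards [nhdsWithin_le_nhds (Iio_mem_nhds hgt)] with t hts
    exact indicator_of_notMem (notMem_Iic.2 hts) _

lemma integral_comp_sub_eq_integral_indicator_Iic {r t : ℝ} (ht : t ∈ Icc 0 r) (K : ℝ → ℝ → E) :
    ∫ s in (0:ℝ)..t, K (t - s) s =
      ∫ s in (0:ℝ)..r, (Iic t).indicator (fun s => K s (t - s)) s := by
  refine Eq.trans ?_ (intervalIntegral.integral_indicator ht).symm
  simpa using intervalIntegral.integral_comp_sub_left (a := 0) (b := t)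
    (fun s => K s (t - s)) t

lemma continuousOn_integral_triangle {r : ℝ} {c : ℝ → ℝ} (hc : IntervalIntegrable c volume 0 r)
    {H : ℝ → ℝ → E} (hH : ContinuousOn (uncurry H) (triangle r)) :
    ContinuousOn (fun t => ∫ s in (0:ℝ)..t, c (t - s) • H t s) (Icc 0 r) := by
  intro t₀ ht₀
  have hr : 0 ≤ r := ht₀.1.trans ht₀.2
  obtain ⟨M, hM⟩ := (isCompact_triangle r).exists_bound_of_continuousOn hH
  have mem : ∀ {t s}, t ∈ Icc 0 r → s ∈ Icc 0 t → (t, t - s) ∈ triangle r := fun ht hs =>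
    ⟨sub_nonneg.2 hs.2, sub_le_self _ hs.1, ht.2⟩
  have reflect := fun t (ht : t ∈ Icc 0 r) =>
    integral_comp_sub_eq_integral_indicator_Iic ht fun τ s => c τ • H t s
  refine ContinuousWithinAt.congr ?_ reflect (reflect t₀ ht₀)
  refine intervalIntegral.continuousWithinAt_of_dominated_interval
    (bound := fun s => ‖c s‖ * M) ?measurable ?bound (hc.norm.mul_const M) ?continuous
  case measurable =>
    filter_upwards [self_mem_nhdsWithin] with t ht
    have section_cont : ContinuousOn (fun s => H t (t - s)) (Icc 0 t) :=
      hH.comp (f := fun s => (t, t - s)) (by fun_prop) fun s hs => mem ht hs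
    rw [aestronglyMeasurable_indicator_iff measurableSet_Iic,
      Measure.restrict_restrict measurableSet_Iic, uIoc_of_le hr]
    exact (hc.1.aestronglyMeasurable.mono_set inter_subset_right).smul
      ((section_cont.aestronglyMeasurable measurableSet_Icc).mono_set
        (show Iic t ∩ Ioc 0 r ⊆ Icc 0 t from fun s hs => ⟨hs.2.1.le, hs.1⟩))
  case bound =>
    filter_upwards [self_mem_nhdsWithin] with t ht
    refine .of_forall fun s hs => ?_
    rw [uIoc_of_le hr] at hs
    have hM₀ : 0 ≤ M := (norm_nonneg _).trans (hM _ (mem ht ⟨le_rfl, ht.1⟩))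
    rw [norm_indicator_eq_indicator_norm]
    refine indicator_apply_le' (fun hst => ?_) fun _ => by positivity
    rw [norm_smul]
    gcongr
    exact hM _ (mem ht ⟨hs.1.le, hst⟩)
  case continuous =>
    filter_upwards [compl_mem_ae_iff.2 (measure_singleton t₀)] with s hne hs
    rw [uIoc_of_le hr] at hs
    refine continuousWithinAt_indicator_Iic hne fun hlt => ContinuousWithinAt.const_smul ?_ (c s)
    exact (hH _ (mem ht₀ ⟨hs.1.le, hlt.le⟩)).comp (f := fun t => (t, t - s)) (by fun_prop)
      fun t ht => mem ht.1 ⟨hs.1.le, ht.2⟩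

lemma continuousOn_uncurry_comp_sub {Y Z : Type*} [TopologicalSpace Y] [TopologicalSpace Z] {r : ℝ}
    {T : ℝ → Y → Z} (hT : ContinuousOn (uncurry T) (Icc 0 r ×ˢ univ)) {f : ℝ → Y}
    (hf : ContinuousOn f (Icc 0 r)) :
    ContinuousOn (uncurry fun t s => T (t - s) (f s)) (triangle r) := by
  have arguments : ContinuousOn (fun p : ℝ × ℝ => (p.1 - p.2, f p.2)) (triangle r) :=
    (continuous_fst.sub continuous_snd).continuousOn.prodMk
      (hf.comp continuousOn_snd fun p hp => ⟨hp.1, hp.2.1.trans hp.2.2⟩)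
  exact hT.comp arguments fun p hp =>
    ⟨⟨sub_nonneg.2 hp.2.1, by linarith [hp.1, hp.2.2]⟩, trivial⟩

lemma continuousOn_apply_sub {Y Z : Type*} [TopologicalSpace Y] [TopologicalSpace Z] {t : ℝ}
    {T : ℝ → Y → Z} (hT : ContinuousOn (uncurry T) (Icc 0 t ×ˢ univ)) {f : ℝ → Y}
    (hf : ContinuousOn f (Icc 0 t)) : ContinuousOn (fun s => T (t - s) (f s)) (Icc 0 t) :=
  (continuousOn_uncurry_comp_sub hT hf).comp (f := fun s => (t, s)) (by fun_prop)
    fun _ hs => ⟨hs.1, hs.2, le_rfl⟩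

end Triangle

section FracInt

variable {E : Type*} [NormedAddCommGroup E] [NormedSpace ℝ E] {a b r t : ℝ} {φ ψ : ℝ → E}

/-- The Riemann–Liouville fractional integral `g_β * φ` of order `β`, based at `0`. -/
noncomputable def fracInt (β : ℝ) (φ : ℝ → E) (t : ℝ) : E :=
  ∫ s in (0:ℝ)..t, g β (t - s) • φ s

lemma fracInt_one (φ : ℝ → E) (t : ℝ) : fracInt 1 φ t = ∫ s in (0:ℝ)..t, φ s := by
  simp only [fracInt, g_one, one_smul]

lemma fracInt_zero_right (b : ℝ) (φ : ℝ → E) : fracInt b φ 0 = 0 :=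
  intervalIntegral.integral_same

lemma fracInt_congr (ht : 0 ≤ t) (h : EqOn φ ψ (Icc 0 t)) : fracInt b φ t = fracInt b ψ t := by
  refine intervalIntegral.integral_congr fun s hs => ?_
  rw [uIcc_of_le ht] at hs
  simp only [h hs]

lemma intervalIntegrable_g_smul (hb : 0 < b) (ht : 0 ≤ t) (hφ : ContinuousOn φ (Icc 0 t)) :
    IntervalIntegrable (fun s => g b (t - s) • φ s) volume 0 t := by
  rw [← uIcc_of_le ht] at hφ
  refine IntervalIntegrable.smul_continuousOn ?_ hφ
  simpa using (intervalIntegrable_g hb t 0).comp_sub_left t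

lemma fracInt_add (hb : 0 < b) (ht : 0 ≤ t) (hφ : ContinuousOn φ (Icc 0 t))
    (hψ : ContinuousOn ψ (Icc 0 t)) :
    fracInt b (fun s => φ s + ψ s) t = fracInt b φ t + fracInt b ψ t := by
  simp only [fracInt, smul_add]
  exact intervalIntegral.integral_add (intervalIntegrable_g_smul hb ht hφ)
    (intervalIntegrable_g_smul hb ht hψ)

lemma norm_fracInt_le (hb : 0 < b) (ht : 0 ≤ t) {M : ℝ} (hM : ∀ s ∈ Icc 0 t, ‖φ s‖ ≤ M) :
    ‖fracInt b φ t‖ ≤ (∫ s in (0:ℝ)..t, |g b (t - s)|) * M := by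
  rw [← intervalIntegral.integral_mul_const]
  refine intervalIntegral.norm_integral_le_of_norm_le ht (.of_forall fun s hs => ?_) ?_
  · rw [norm_smul, Real.norm_eq_abs]
    gcongr
    exact hM s ⟨hs.1.le, hs.2⟩
  · refine IntervalIntegrable.mul_const (IntervalIntegrable.abs ?_) M
    simpa using (intervalIntegrable_g hb t 0).comp_sub_left t

lemma continuousOn_fracInt (hb : 0 < b) (hφ : ContinuousOn φ (Icc 0 r)) :
    ContinuousOn (fracInt b φ) (Icc 0 r) :=
  continuousOn_integral_triangle (H := fun _ s => φ s) (intervalIntegrable_g hb 0 r)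
    (hφ.comp continuousOn_snd fun _ hp => ⟨hp.1, hp.2.1.trans hp.2.2⟩)

lemma fracInt_fracInt [CompleteSpace E] (ha : 0 < a) (hb : 0 < b) (ht : 0 ≤ t)
    (hφ : ContinuousOn φ (Icc 0 t)) :
    fracInt a (fracInt b φ) t = fracInt (a + b) φ t := by
  calc fracInt a (fracInt b φ) t
      = ∫ s in (0:ℝ)..t, ∫ σ in (0:ℝ)..s, (g a (t - s) * g b (s - σ)) • φ σ := by
        simp only [fracInt, mul_smul, intervalIntegral.integral_smul]
    _ = ∫ σ in (0:ℝ)..t, ∫ s in σ..t, (g a (t - s) * g b (s - σ)) • φ σ :=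
        integral_integral_swap_of_continuousOn_triangle ht (H := fun _ σ => φ σ)
          (intervalIntegrable_g ha 0 t) (intervalIntegrable_g hb 0 t)
          (hφ.comp continuousOn_snd fun _ hp => ⟨hp.1, hp.2.1.trans hp.2.2⟩)
    _ = fracInt (a + b) φ t := by
        rw [fracInt, intervalIntegral.integral_of_le ht, intervalIntegral.integral_of_le ht,
          integral_Ioc_eq_integral_Ioo, integral_Ioc_eq_integral_Ioo]
        refine setIntegral_congr_fun measurableSet_Ioo fun σ hσ => ?_
        simp only [intervalIntegral.integral_smul_const, integral_g_mul_g ha hb hσ.2]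

lemma hasDerivWithinAt_fracInt_one [CompleteSpace E] (hφ : ContinuousOn φ (Icc 0 r))
    (ht : t ∈ Icc 0 r) : HasDerivWithinAt (fracInt 1 φ) (φ t) (Icc 0 r) t := by
  have : Fact (t ∈ Icc 0 r) := ⟨ht⟩
  have hsub : uIcc 0 t ⊆ Icc 0 r := by
    rw [uIcc_of_le ht.1]
    exact Icc_subset_Icc_right ht.2
  rw [funext (fracInt_one φ)]
  exact intervalIntegral.integral_hasDerivWithinAt_right (hφ.mono hsub).intervalIntegrable
    (hφ.stronglyMeasurableAtFilter_nhdsWithin measurableSet_Icc t) (hφ t ht)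

end FracInt

section StronglyContinuous

variable {E F : Type*} [NormedAddCommGroup E] [NormedSpace ℝ E] [CompleteSpace E]
  [NormedAddCommGroup F] [NormedSpace ℝ F] {b r t : ℝ} {T : ℝ → E →L[ℝ] F}

lemma exists_norm_le_of_continuousOn_apply (hT : ∀ x, ContinuousOn (fun t => T t x) (Icc 0 r)) :
    ∃ M, 0 ≤ M ∧ ∀ s ∈ Icc 0 r, ‖T s‖ ≤ M := by
  obtain ⟨M, hM⟩ := banach_steinhaus (g := fun s : Icc 0 r => T s) fun x => by
    obtain ⟨C, hC⟩ := isCompact_Icc.exists_bound_of_continuousOn (hT x)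
    exact ⟨C, fun s => hC s s.2⟩
  exact ⟨max M 0, le_max_right _ _, fun s hs => (hM ⟨s, hs⟩).trans (le_max_left _ _)⟩

lemma continuousOn_uncurry_of_continuousOn_apply
    (hT : ∀ x, ContinuousOn (fun t => T t x) (Icc 0 r)) :
    ContinuousOn (uncurry fun t => ⇑(T t)) (Icc 0 r ×ˢ univ) := by
  obtain ⟨M, hM₀, hM⟩ := exists_norm_le_of_continuousOn_apply hT
  lift M to NNReal using hM₀
  exact continuousOn_prod_of_continuousOn_lipschitzOnWith' _ M
    (fun t ht => ((T t).lipschitz.weaken (hM t ht)).lipschitzOnWith) fun x _ => hT x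

lemma exists_continuousLinearMap_eq_fracInt (hb : 0 < b) (ht : 0 ≤ t)
    (hT : ∀ x, ContinuousOn (fun t => T t x) (Icc 0 t)) :
    ∃ J : E →L[ℝ] F, ∀ x, J x = fracInt b (fun s => T s x) t := by
  obtain ⟨M, -, hM⟩ := exists_norm_le_of_continuousOn_apply hT
  let J : E →+ F := .mk' (fun x => fracInt b (fun s => T s x) t) fun x y => by
    simpa only [map_add] using fracInt_add hb ht (hT x) (hT y)
  have bound : ∀ x, ‖J x‖ ≤ (∫ s in (0:ℝ)..t, |g b (t - s)|) * M * ‖x‖ := fun x => by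
    rw [mul_assoc]
    exact norm_fracInt_le hb ht fun s hs => (T s).le_of_opNorm_le (hM s hs) x
  exact ⟨J.toRealLinearMap (AddMonoidHomClass.continuous_of_bound J _ bound), fun _ => rfl⟩

lemma continuousOn_uncurry_fracInt_apply (hb : 0 < b)
    (hT : ∀ x, ContinuousOn (fun t => T t x) (Icc 0 r)) :
    ContinuousOn (uncurry fun t x => fracInt b (fun s => T s x) t) (Icc 0 r ×ˢ univ) := by
  choose! J hJ using fun t (ht : t ∈ Icc 0 r) => exists_continuousLinearMap_eq_fracInt hb ht.1
    fun x => (hT x).mono (Icc_subset_Icc_right ht.2)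
  have hJ_cont : ∀ x, ContinuousOn (fun t => J t x) (Icc 0 r) := fun x =>
    (continuousOn_fracInt hb (hT x)).congr fun t ht => hJ t ht x
  exact (continuousOn_uncurry_of_continuousOn_apply hJ_cont).congr
    fun p hp => (hJ p.1 hp.1 p.2).symm

end StronglyContinuous

section OpConv

variable {E F Y : Type*} [NormedAddCommGroup E] [NormedSpace ℝ E] [CompleteSpace E]
  [NormedAddCommGroup F] [NormedSpace ℝ F] [TopologicalSpace Y] {b r t : ℝ}

/-- The convolution `T * f` of a family of maps `T` with a vector-valued function `f`. The maps
are not bundled, so that it applies to families such as `Pa α S`. -/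
noncomputable def opConv {Y : Type*} (T : ℝ → Y → F) (f : ℝ → Y) (t : ℝ) : F :=
  ∫ s in (0:ℝ)..t, T (t - s) (f s)

lemma continuousOn_opConv {T : ℝ → Y → F} (hT : ContinuousOn (uncurry T) (Icc 0 r ×ˢ univ))
    {f : ℝ → Y} (hf : ContinuousOn f (Icc 0 r)) : ContinuousOn (opConv T f) (Icc 0 r) := by
  unfold opConv
  simpa only [one_smul] using continuousOn_integral_triangle (c := fun _ => 1)
    intervalIntegrable_const (continuousOn_uncurry_comp_sub hT hf)

lemma opConv_const {Y : Type*} (T : ℝ → Y → F) (x : Y) (t : ℝ) :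
    opConv T (fun _ => x) t = fracInt 1 (fun s => T s x) t := by
  rw [fracInt_one]
  simpa [opConv] using intervalIntegral.integral_comp_sub_left (a := 0) (b := t)
    (fun s => T s x) t

lemma opConv_fracInt_left {T : ℝ → Y → F} (hT : ContinuousOn (uncurry T) (Icc 0 t ×ˢ univ))
    {f : ℝ → Y} (hf : ContinuousOn f (Icc 0 t)) (hb : 0 < b) (ht : 0 ≤ t) :
    opConv (fun s x => fracInt b (fun τ => T τ x) s) f t = fracInt b (opConv T f) t := by
  have swap := integral_integral_swap_of_continuousOn_triangle (c := g b) (d := fun _ => 1) ht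
    (intervalIntegrable_g hb 0 t) intervalIntegrable_const (continuousOn_uncurry_comp_sub hT hf)
  simp only [mul_one, intervalIntegral.integral_smul] at swap
  refine Eq.trans ?_ swap.symm
  refine intervalIntegral.integral_congr fun s _ => ?_
  simpa [fracInt] using (intervalIntegral.integral_comp_sub_right
    (fun τ => g b (t - s - τ) • T τ (f s)) s (a := s) (b := t)).symm

lemma opConv_fracInt_right [CompleteSpace F] {T : ℝ → E →L[ℝ] F}
    (hT : ∀ x, ContinuousOn (fun t => T t x) (Icc 0 t)) {φ : ℝ → E}
    (hφ : ContinuousOn φ (Icc 0 t)) (hb : 0 < b) (ht : 0 ≤ t) :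
    opConv (fun s => T s) (fracInt b φ) t = fracInt b (opConv (fun s => T s) φ) t := by
  have hT' := continuousOn_uncurry_of_continuousOn_apply hT
  have arguments : ContinuousOn (fun p : ℝ × ℝ => (t - p.1, φ p.2)) (triangle t) :=
    (continuous_const.sub continuous_fst).continuousOn.prodMk
      (hφ.comp continuousOn_snd fun p hp => ⟨hp.1, hp.2.1.trans hp.2.2⟩)
  have integrand_cont : ContinuousOn (uncurry fun s σ => T (t - s) (φ σ)) (triangle t) :=
    hT'.comp arguments fun p hp => ⟨⟨sub_nonneg.2 hp.2.2, by linarith [hp.1, hp.2.1]⟩, trivial⟩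
  calc opConv (fun s => T s) (fracInt b φ) t
      = ∫ s in (0:ℝ)..t, ∫ σ in (0:ℝ)..s, ((1 : ℝ) * g b (s - σ)) • T (t - s) (φ σ) := by
        refine intervalIntegral.integral_congr fun s hs => ?_
        rw [uIcc_of_le ht] at hs
        have integrable := intervalIntegrable_g_smul hb hs.1 (hφ.mono (Icc_subset_Icc_right hs.2))
        simp only [fracInt, one_mul, ← (T (t - s)).intervalIntegral_comp_comm integrable, map_smul]
    _ = ∫ σ in (0:ℝ)..t, ∫ s in σ..t, ((1 : ℝ) * g b (s - σ)) • T (t - s) (φ σ) :=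
        integral_integral_swap_of_continuousOn_triangle (c := fun _ => 1) ht
          intervalIntegrable_const (intervalIntegrable_g hb 0 t) integrand_cont
    _ = opConv (fun s x => fracInt b (fun τ => T τ x) s) φ t := by
        refine intervalIntegral.integral_congr fun σ _ => ?_
        simpa [fracInt, sub_right_comm t σ] using
          intervalIntegral.integral_comp_sub_left (fun τ => g b (t - σ - τ) • T τ (φ σ)) t
            (a := σ) (b := t)
    _ = fracInt b (opConv (fun s => T s) φ) t := opConv_fracInt_left hT' hφ hb ht

lemma opConv_sub {T : ℝ → E →L[ℝ] F}
    (hT : ∀ x, ContinuousOn (fun t => T t x) (Icc 0 t)) {f₁ f₂ : ℝ → E}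
    (hf₁ : ContinuousOn f₁ (Icc 0 t)) (hf₂ : ContinuousOn f₂ (Icc 0 t)) (ht : 0 ≤ t) :
    opConv (fun s => T s) (fun s => f₁ s - f₂ s) t =
      opConv (fun s => T s) f₁ t - opConv (fun s => T s) f₂ t := by
  have integrable : ∀ {f : ℝ → E}, ContinuousOn f (Icc 0 t) →
      IntervalIntegrable (fun s => T (t - s) (f s)) volume 0 t := fun hf =>
    (continuousOn_apply_sub (continuousOn_uncurry_of_continuousOn_apply hT)
      hf).intervalIntegrable_of_Icc ht
  simp only [opConv, map_sub]
  exact intervalIntegral.integral_sub (integrable hf₁) (integrable hf₂)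

end OpConv

section RiemannSum

variable {F : Type*} [NormedAddCommGroup F] [NormedSpace ℝ F] {t : ℝ}

/-- The points `i t / n` dividing `[0, t]` into `n` intervals of equal length. -/
noncomputable def uniformPartition (t : ℝ) (n i : ℕ) : ℝ := i * (t / n)

lemma uniformPartition_zero (t : ℝ) (n : ℕ) : uniformPartition t n 0 = 0 := by
  simp [uniformPartition]

lemma uniformPartition_self (t : ℝ) {n : ℕ} (hn : n ≠ 0) : uniformPartition t n n = t :=
  mul_div_cancel₀ t (Nat.cast_ne_zero.2 hn)

lemma uniformPartition_succ (t : ℝ) (n i : ℕ) :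
    uniformPartition t n (i + 1) = uniformPartition t n i + t / n := by
  simp only [uniformPartition]
  push_cast
  ring

lemma monotone_uniformPartition (ht : 0 ≤ t) (n : ℕ) : Monotone (uniformPartition t n) :=
  fun i j hij => by unfold uniformPartition; gcongr

lemma uniformPartition_mem_Icc (ht : 0 ≤ t) {n i : ℕ} (hi : i < n) :
    uniformPartition t n i ∈ Icc 0 t :=
  ⟨(uniformPartition_zero t n).symm.trans_le (monotone_uniformPartition ht n i.zero_le),
    (monotone_uniformPartition ht n hi.le).trans_eq
      (uniformPartition_self t (Nat.ne_zero_of_lt hi))⟩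

lemma norm_integral_sub_integral_diagonal_le {a b ε : ℝ} (hab : a ≤ b) {Φ : ℝ → ℝ → F}
    (hΦ : ContinuousOn (uncurry Φ) (Icc a b ×ˢ Icc a b))
    (hε : ∀ s ∈ Icc a b, ‖Φ b s - Φ s s‖ ≤ ε) :
    ‖(∫ s in a..b, Φ b s) - ∫ s in a..b, Φ s s‖ ≤ ε * (b - a) := by
  have section_integrable : IntervalIntegrable (fun s => Φ b s) volume a b :=
    (hΦ.comp (f := fun s => (b, s)) (by fun_prop) fun s hs =>
      ⟨right_mem_Icc.2 hab, hs⟩).intervalIntegrable_of_Icc hab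
  have diagonal_integrable : IntervalIntegrable (fun s => Φ s s) volume a b :=
    (hΦ.comp (f := fun s => (s, s)) (by fun_prop) fun s hs =>
      ⟨hs, hs⟩).intervalIntegrable_of_Icc hab
  rw [← intervalIntegral.integral_sub section_integrable diagonal_integrable,
    ← abs_of_nonneg (sub_nonneg.2 hab)]
  refine intervalIntegral.norm_integral_le_of_norm_le_const fun s hs => hε s ?_
  rw [uIoc_of_le hab] at hs
  exact ⟨hs.1.le, hs.2⟩

lemma norm_sum_integral_sub_integral_diagonal_le {d : ℕ → ℝ} (hd : Monotone d) (n : ℕ) {ε : ℝ}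
    {Φ : ℝ → ℝ → F} (hΦ : ContinuousOn (uncurry Φ) (Icc (d 0) (d n) ×ˢ Icc (d 0) (d n)))
    (hε : ∀ i < n, ∀ s ∈ Icc (d i) (d (i + 1)), ‖Φ (d (i + 1)) s - Φ s s‖ ≤ ε) :
    ‖(∑ i ∈ Finset.range n, ∫ s in d i..d (i + 1), Φ (d (i + 1)) s) -
      ∫ s in d 0..d n, Φ s s‖ ≤ ε * (d n - d 0) := by
  have hsub : ∀ i < n, Icc (d i) (d (i + 1)) ⊆ Icc (d 0) (d n) := fun i hi =>
    Icc_subset_Icc (hd i.zero_le) (hd hi)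
  have diagonal : ContinuousOn (fun s => Φ s s) (Icc (d 0) (d n)) :=
    hΦ.comp (f := fun s => (s, s)) (by fun_prop) fun s hs => ⟨hs, hs⟩
  rw [← intervalIntegral.sum_integral_adjacent_intervals fun i hi =>
      (diagonal.mono (hsub i hi)).intervalIntegrable_of_Icc (hd i.le_succ),
    ← Finset.sum_sub_distrib, ← Finset.sum_range_sub, Finset.mul_sum]
  refine norm_sum_le_of_le _ fun i hi => ?_
  rw [Finset.mem_range] at hi
  exact norm_integral_sub_integral_diagonal_le (hd i.le_succ)
    (hΦ.mono (prod_mono (hsub i hi) (hsub i hi))) (hε i hi)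

lemma tendsto_sum_integral_uniformPartition (ht : 0 ≤ t) {Φ : ℝ → ℝ → F}
    (hΦ : ContinuousOn (uncurry Φ) (Icc 0 t ×ˢ Icc 0 t)) :
    Tendsto (fun n => ∑ i ∈ Finset.range n,
        ∫ s in uniformPartition t n i..uniformPartition t n (i + 1),
          Φ (uniformPartition t n (i + 1)) s)
      atTop (𝓝 (∫ s in (0:ℝ)..t, Φ s s)) := by
  have uniform_cont := (isCompact_Icc.prod isCompact_Icc).uniformContinuousOn_of_continuous hΦ
  refine Metric.tendsto_nhds.2 fun ε hε => ?_
  obtain ⟨δ, hδ, hclose⟩ := Metric.uniformContinuousOn_iff.1 uniform_cont (ε / (t + 1))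
    (by positivity)
  filter_upwards [(tendsto_const_div_atTop_nhds_zero_nat t).eventually_lt_const hδ,
    eventually_ne_atTop 0] with n mesh hn
  have hd := monotone_uniformPartition ht n
  have hd0 := uniformPartition_zero t n
  have hdn := uniformPartition_self t hn
  have error := norm_sum_integral_sub_integral_diagonal_le (ε := ε / (t + 1)) hd n
    (by rwa [hd0, hdn]) fun i hi s hs => by
      have hsub : Icc (uniformPartition t n i) (uniformPartition t n (i + 1)) ⊆ Icc 0 t :=
        Icc_subset_Icc (hd0.symm.trans_le (hd i.zero_le)) ((hd hi).trans_eq hdn)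
      have hstep : uniformPartition t n (i + 1) - s < δ := by
        linarith [hs.1, uniformPartition_succ t n i]
      rw [← dist_eq_norm]
      refine (hclose (uniformPartition t n (i + 1), s)
        ⟨hsub (right_mem_Icc.2 (hd i.le_succ)), hsub hs⟩ (s, s) ⟨hsub hs, hsub hs⟩ ?_).le
      rwa [Prod.dist_eq, dist_self, max_eq_left dist_nonneg, Real.dist_eq,
        abs_of_nonneg (sub_nonneg.2 hs.2)]
  rw [hd0, hdn, sub_zero, ← dist_eq_norm] at error
  refine error.trans_lt ?_
  rw [div_mul_eq_mul_div, div_lt_iff₀ (by positivity)]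
  gcongr
  exact lt_add_one t

end RiemannSum

section Semivariation

variable {E F : Type*} [NormedAddCommGroup E] [NormedSpace ℝ E] [NormedAddCommGroup F]
  [NormedSpace ℝ F] {r t C m : ℝ} {T : ℝ → E →L[ℝ] F}

/-- The semivariation of `G` on `[0, r]` is at most `C`; this is `BoundedSemivariation` with the
bound made explicit, for operators between real spaces. -/
def SemivariationLE (G : ℝ → E →L[ℝ] F) (r C : ℝ) : Prop :=
  ∀ (n : ℕ) (d : ℕ → ℝ) (x : ℕ → E),
    d 0 = 0 → d n = r → (∀ i < n, d i < d (i + 1)) → (∀ i, ‖x i‖ ≤ 1) →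
    ‖∑ i ∈ Finset.range n, (G (d (i + 1)) - G (d i)) (x i)‖ ≤ C

lemma SemivariationLE.mono (hT : SemivariationLE T r C) (ht : t ≤ r) : SemivariationLE T t C := by
  rcases ht.eq_or_lt with rfl | htr
  · exact hT
  intro n d x hd0 hdn hd hx
  have extended := hT (n + 1) (fun i => if i ≤ n then d i else r)
    (fun i => if i < n then x i else 0) (by simpa using hd0) (by simp) ?_ ?_
  · rw [Finset.sum_range_succ] at extended
    convert extended using 2
    rw [if_neg (lt_irrefl n), map_zero, add_zero]
    refine Finset.sum_congr rfl fun i hi => ?_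
    have hin := Finset.mem_range.1 hi
    simp only [if_pos hin, if_pos hin.le, if_pos (Nat.succ_le_of_lt hin)]
  · intro i hi
    rcases (Nat.lt_succ_iff.1 hi).lt_or_eq with hin | rfl
    · simpa [hin.le, Nat.succ_le_of_lt hin] using hd i hin
    · simpa [hdn] using htr
  · intro i
    split_ifs
    exacts [hx i, by simp]

lemma SemivariationLE.norm_sum_le (hT : SemivariationLE T r C) (hm : 0 ≤ m) {n : ℕ} {d : ℕ → ℝ}
    {x : ℕ → E} (hd0 : d 0 = 0) (hdn : d n = r) (hd : ∀ i < n, d i < d (i + 1))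
    (hx : ∀ i < n, ‖x i‖ ≤ m) :
    ‖∑ i ∈ Finset.range n, (T (d (i + 1)) - T (d i)) (x i)‖ ≤ C * m := by
  rcases hm.eq_or_lt with rfl | hm
  · rw [mul_zero, Finset.sum_eq_zero fun i hi => ?_, norm_zero]
    rw [norm_le_zero_iff.1 (hx i (Finset.mem_range.1 hi)), map_zero]
  have normalized := hT n d (fun i => if i < n then m⁻¹ • x i else 0) hd0 hdn hd fun i => by
    split_ifs with hi
    · rw [norm_smul, norm_inv, Real.norm_of_nonneg hm.le, inv_mul_le_one₀ hm]
      exact hx i hi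
    · simp
  have rescale : ∑ i ∈ Finset.range n, (T (d (i + 1)) - T (d i)) (if i < n then m⁻¹ • x i else 0) =
      m⁻¹ • ∑ i ∈ Finset.range n, (T (d (i + 1)) - T (d i)) (x i) := by
    rw [Finset.smul_sum]
    refine Finset.sum_congr rfl fun i hi => ?_
    rw [if_pos (Finset.mem_range.1 hi), map_smul]
  rwa [rescale, norm_smul, norm_inv, Real.norm_of_nonneg hm.le, inv_mul_le_iff₀' hm] at normalized

lemma add_sum_range_by_parts (U : ℕ → E →L[ℝ] F) (a : ℕ → E) (n : ℕ) :
    U n (a n) + ∑ i ∈ Finset.range n, U (i + 1) (a i - a (i + 1)) =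
      U 0 (a 0) + ∑ i ∈ Finset.range n, (U (i + 1) - U i) (a i) := by
  induction n with
  | zero => simp
  | succ n ih =>
    rw [Finset.sum_range_succ, Finset.sum_range_succ, ← add_assoc (U 0 (a 0)), ← ih]
    simp only [map_sub, sub_apply]
    abel

/-- The derivative of `T * f` for continuously differentiable `f`, that is,
`T(t) f(0) + (T * f')(t)`. -/
noncomputable def opConvDeriv (T : ℝ → E →L[ℝ] F) (f : ℝ → E) (t : ℝ) : F :=
  T t (f 0) + opConv (fun s => T s) (deriv f) t

variable {f : ℝ → E}

lemma exists_contDiff_tendstoUniformlyOn (hf : ContinuousOn f (Icc 0 r)) :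
    ∃ fₙ : ℕ → ℝ → E, (∀ n, ContDiff ℝ 1 (fₙ n)) ∧ TendstoUniformlyOn fₙ f atTop (Icc 0 r) := by
  rcases lt_or_ge r 0 with hr | hr
  · exact ⟨fun _ _ => 0, fun _ => contDiff_const, Icc_eq_empty hr.not_ge ▸ tendstoUniformlyOn_empty⟩
  have hf' : Continuous (IccExtend hr ((Icc 0 r).domRestrict f)) := hf.domRestrict.Icc_extend'
  choose fₙ smooth close _ using fun n : ℕ =>
    hf'.exists_contDiff_approx 1 (ε := fun _ => 1 / (n + 1 : ℝ)) continuous_const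
      fun _ => Nat.one_div_pos_of_nat
  refine ⟨fₙ, smooth, Metric.tendstoUniformlyOn_iff.2 fun ε hε => ?_⟩
  filter_upwards [tendsto_one_div_add_atTop_nhds_zero_nat.eventually_lt_const hε] with n hn s hs
  have closeAt := close n s
  rw [IccExtend_of_mem _ _ hs, dist_comm] at closeAt
  exact closeAt.trans hn

variable [CompleteSpace E]

lemma continuousOn_opConvDeriv (hT : ∀ x, ContinuousOn (fun t => T t x) (Icc 0 r))
    (hf : ContDiff ℝ 1 f) : ContinuousOn (opConvDeriv T f) (Icc 0 r) :=
  (hT (f 0)).add (continuousOn_opConv (continuousOn_uncurry_of_continuousOn_apply hT)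
    (hf.continuous_deriv le_rfl).continuousOn)

lemma opConv_eq_fracInt_one_opConvDeriv [CompleteSpace F]
    (hT : ∀ x, ContinuousOn (fun t => T t x) (Icc 0 t)) (hf : ContDiff ℝ 1 f) (ht : 0 ≤ t) :
    opConv (fun s => T s) f t = fracInt 1 (opConvDeriv T f) t := by
  have hf' : ContinuousOn (deriv f) (Icc 0 t) := (hf.continuous_deriv le_rfl).continuousOn
  have hJ : ContinuousOn (opConv (fun s => T s) (deriv f)) (Icc 0 t) :=
    continuousOn_opConv (continuousOn_uncurry_of_continuousOn_apply hT) hf'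
  have newton_leibniz : fracInt 1 (deriv f) = fun s => f s - f 0 := funext fun s => by
    rw [fracInt_one, intervalIntegral.integral_deriv_eq_sub
      (fun s _ => hf.differentiable_one s) ((hf.continuous_deriv le_rfl).intervalIntegrable _ _)]
  have commute := opConv_fracInt_right hT hf' one_pos ht
  rw [newton_leibniz, opConv_sub hT hf.continuous.continuousOn continuousOn_const ht,
    opConv_const, sub_eq_iff_eq_add'] at commute
  rw [commute, ← fracInt_add one_pos ht (hT (f 0)) hJ]
  rfl

lemma opConvDeriv_sub (hT : ∀ x, ContinuousOn (fun t => T t x) (Icc 0 t)) {f₁ f₂ : ℝ → E}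
    (hf₁ : ContDiff ℝ 1 f₁) (hf₂ : ContDiff ℝ 1 f₂) (ht : 0 ≤ t) :
    opConvDeriv T (f₁ - f₂) t = opConvDeriv T f₁ t - opConvDeriv T f₂ t := by
  have derivSub : deriv (f₁ - f₂) = fun s => deriv f₁ s - deriv f₂ s := funext fun s =>
    deriv_sub (hf₁.differentiable_one s) (hf₂.differentiable_one s)
  simp only [opConvDeriv, Pi.sub_apply, map_sub, derivSub]
  rw [opConv_sub hT (hf₁.continuous_deriv le_rfl).continuousOn
    (hf₂.continuous_deriv le_rfl).continuousOn ht]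
  abel

lemma tendsto_sum_opConvDeriv [CompleteSpace F]
    (hT : ∀ x, ContinuousOn (fun t => T t x) (Icc 0 t)) (hf : ContDiff ℝ 1 f) (ht : 0 ≤ t) :
    Tendsto (fun n => T 0 (f t) + ∑ i ∈ Finset.range n,
        (T (uniformPartition t n (i + 1)) - T (uniformPartition t n i))
          (f (t - uniformPartition t n i)))
      atTop (𝓝 (opConvDeriv T f t)) := by
  have hf' : Continuous (deriv f) := hf.continuous_deriv le_rfl
  have integrand_cont : ContinuousOn (uncurry fun τ s => T τ (deriv f (t - s)))
      (Icc 0 t ×ˢ Icc 0 t) :=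
    (continuousOn_uncurry_of_continuousOn_apply hT).comp
      (f := fun p : ℝ × ℝ => (p.1, deriv f (t - p.2))) (by fun_prop) fun p hp => ⟨hp.1, trivial⟩
  have riemann := tendsto_sum_integral_uniformPartition ht integrand_cont
  have reflect : ∫ s in (0:ℝ)..t, T s (deriv f (t - s)) = opConv (fun s => T s) (deriv f) t := by
    simpa [opConv] using intervalIntegral.integral_comp_sub_left (a := 0) (b := t)
      (fun s => T (t - s) (deriv f s)) t
  have piece : ∀ τ a b : ℝ, ∫ s in a..b, T τ (deriv f (t - s)) = T τ (f (t - a) - f (t - b)) :=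
    fun τ a b => by
      have integrable : IntervalIntegrable (fun s => deriv f (t - s)) volume a b :=
        Continuous.intervalIntegrable (by fun_prop) _ _
      rw [(T τ).intervalIntegral_comp_comm integrable,
        intervalIntegral.integral_comp_sub_left (deriv f), intervalIntegral.integral_deriv_eq_sub
          (fun s _ => hf.differentiable_one s) (hf'.intervalIntegrable _ _)]
  simp only [reflect, piece] at riemann
  refine (riemann.const_add (T t (f 0))).congr' ?_
  filter_upwards [eventually_ne_atTop 0] with n hn
  simpa [uniformPartition_zero, uniformPartition_self t hn] using add_sum_range_by_parts
    (fun i => T (uniformPartition t n i)) (fun i => f (t - uniformPartition t n i)) n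

lemma norm_opConvDeriv_le [CompleteSpace F]
    (hT : ∀ x, ContinuousOn (fun t => T t x) (Icc 0 t)) (hC : SemivariationLE T t C)
    (hf : ContDiff ℝ 1 f) (ht : 0 ≤ t) (hm : ∀ s ∈ Icc 0 t, ‖f s‖ ≤ m) :
    ‖opConvDeriv T f t‖ ≤ (‖T 0‖ + C) * m := by
  have bound_at_zero : ‖T 0 (f t)‖ ≤ ‖T 0‖ * m := (T 0).le_opNorm_of_le (hm t ⟨ht, le_rfl⟩)
  rcases ht.eq_or_lt with rfl | ht'
  · have hC₀ : 0 ≤ C := by simpa using hC 0 (fun _ => 0) (fun _ => 0) rfl rfl (by simp) (by simp)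
    have hm₀ : 0 ≤ m := (norm_nonneg _).trans (hm 0 ⟨le_rfl, le_rfl⟩)
    simp only [opConvDeriv, opConv, intervalIntegral.integral_same, add_zero, add_mul]
    exact bound_at_zero.trans (le_add_of_nonneg_right (by positivity))
  refine le_of_tendsto (tendsto_sum_opConvDeriv hT hf ht).norm ?_
  filter_upwards [eventually_ne_atTop 0] with n hn
  rw [add_mul]
  refine norm_add_le_of_le bound_at_zero (hC.norm_sum_le ((norm_nonneg _).trans (hm t ⟨ht, le_rfl⟩))
    (uniformPartition_zero t n) (uniformPartition_self t hn) (fun i _ => ?_) fun i hi => hm _ ?_)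
  · rw [uniformPartition_succ]
    exact lt_add_of_pos_right _ (by positivity)
  · obtain ⟨hpos, hle⟩ := uniformPartition_mem_Icc ht hi
    exact ⟨sub_nonneg.2 hle, sub_le_self _ hpos⟩

lemma uniformCauchySeqOn_opConvDeriv [CompleteSpace F]
    (hT : ∀ x, ContinuousOn (fun t => T t x) (Icc 0 r)) (hC : SemivariationLE T r C)
    {fₙ : ℕ → ℝ → E} (smooth : ∀ n, ContDiff ℝ 1 (fₙ n))
    (cauchy : UniformCauchySeqOn fₙ atTop (Icc 0 r)) :
    UniformCauchySeqOn (fun n => opConvDeriv T (fₙ n)) atTop (Icc 0 r) := by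
  refine Metric.uniformCauchySeqOn_iff.2 fun ε hε => ?_
  have hK : 0 < |‖T 0‖ + C| + 1 := by positivity
  obtain ⟨N, hN⟩ := Metric.uniformCauchySeqOn_iff.1 cauchy (ε / (|‖T 0‖ + C| + 1)) (by positivity)
  refine ⟨N, fun p hp q hq t ht => ?_⟩
  have hT' : ∀ x, ContinuousOn (fun t => T t x) (Icc 0 t) :=
    fun x => (hT x).mono (Icc_subset_Icc_right ht.2)
  have close : ∀ s ∈ Icc 0 t, ‖(fₙ p - fₙ q) s‖ ≤ ε / (|‖T 0‖ + C| + 1) := fun s hs => by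
    rw [Pi.sub_apply, ← dist_eq_norm]
    exact (hN p hp q hq s ⟨hs.1, hs.2.trans ht.2⟩).le
  calc dist (opConvDeriv T (fₙ p) t) (opConvDeriv T (fₙ q) t)
      ≤ (‖T 0‖ + C) * (ε / (|‖T 0‖ + C| + 1)) := by
        rw [dist_eq_norm, ← opConvDeriv_sub hT' (smooth p) (smooth q) ht.1]
        exact norm_opConvDeriv_le hT' (hC.mono ht.2) ((smooth p).sub (smooth q)) ht.1 close
    _ < (|‖T 0‖ + C| + 1) * (ε / (|‖T 0‖ + C| + 1)) := by
        refine mul_lt_mul_of_pos_right ?_ (by positivity)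
        exact (le_abs_self _).trans_lt (lt_add_one _)
    _ = ε := mul_div_cancel₀ _ hK.ne'

lemma tendsto_opConv_of_tendstoUniformlyOn
    (hT : ∀ x, ContinuousOn (fun t => T t x) (Icc 0 t)) (ht : 0 ≤ t) {fₙ : ℕ → ℝ → E}
    (hfₙ : ∀ n, ContinuousOn (fₙ n) (Icc 0 t)) (hlim : TendstoUniformlyOn fₙ f atTop (Icc 0 t)) :
    Tendsto (fun n => opConv (fun s => T s) (fₙ n) t) atTop (𝓝 (opConv (fun s => T s) f t)) := by
  obtain ⟨M, hM₀, hM⟩ := exists_norm_le_of_continuousOn_apply hT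
  have hmem : ∀ {s}, s ∈ Icc 0 t → t - s ∈ Icc 0 t := fun hs =>
    ⟨sub_nonneg.2 hs.2, sub_le_self _ hs.1⟩
  refine TendstoUniformlyOn.tendsto_intervalIntegral_of_continuousOn (.of_forall fun n => ?_) ?_
  · rw [uIcc_of_le ht]
    exact continuousOn_apply_sub (continuousOn_uncurry_of_continuousOn_apply hT) (hfₙ n)
  · rw [uIcc_of_le ht, Metric.tendstoUniformlyOn_iff]
    intro ε hε
    filter_upwards [Metric.tendstoUniformlyOn_iff.1 hlim (ε / (M + 1)) (by positivity)]
      with n hn s hs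
    calc dist (T (t - s) (f s)) (T (t - s) (fₙ n s))
        ≤ M * dist (f s) (fₙ n s) := by
          rw [dist_eq_norm, dist_eq_norm, ← map_sub]
          exact (T _).le_of_opNorm_le (hM _ (hmem hs)) _
      _ ≤ (M + 1) * dist (f s) (fₙ n s) := by
          gcongr
          exact le_add_of_nonneg_right zero_le_one
      _ < ε := (lt_div_iff₀' (by positivity)).1 (hn s hs)

theorem exists_continuousOn_opConv_eq_fracInt_one [CompleteSpace F]
    (hT : ∀ x, ContinuousOn (fun t => T t x) (Icc 0 r)) (hC : SemivariationLE T r C)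
    (hf : ContinuousOn f (Icc 0 r)) :
    ∃ k : ℝ → F, ContinuousOn k (Icc 0 r) ∧
      ∀ t ∈ Icc 0 r, opConv (fun s => T s) f t = fracInt 1 k t := by
  obtain ⟨fₙ, smooth, hlim⟩ := exists_contDiff_tendstoUniformlyOn hf
  have hT' : ∀ {t}, t ∈ Icc 0 r → ∀ x, ContinuousOn (fun t => T t x) (Icc 0 t) :=
    fun ht x => (hT x).mono (Icc_subset_Icc_right ht.2)
  have cauchy : UniformCauchySeqOn (fun n => opConvDeriv T (fₙ n)) atTop (Icc 0 r) :=
    uniformCauchySeqOn_opConvDeriv hT hC smooth hlim.uniformCauchySeqOn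
  choose! k hk using fun t (ht : t ∈ Icc 0 r) =>
    cauchySeq_tendsto_of_complete (cauchy.cauchySeq ht)
  have uniform := cauchy.tendstoUniformlyOn_of_tendsto hk
  refine ⟨k, uniform.continuousOn (.of_forall fun n => continuousOn_opConvDeriv hT (smooth n)),
    fun t ht => ?_⟩
  have hsub : uIcc 0 t ⊆ Icc 0 r := by
    rw [uIcc_of_le ht.1]
    exact Icc_subset_Icc_right ht.2
  have lim_integral := (uniform.mono hsub).tendsto_intervalIntegral_of_continuousOn (μ := volume)
    (.of_forall fun n => (continuousOn_opConvDeriv hT (smooth n)).mono hsub)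
  have lim_opConv := tendsto_opConv_of_tendstoUniformlyOn (hT' ht) ht.1
    (fun n => (smooth n).continuous.continuousOn) (hlim.mono (Icc_subset_Icc_right ht.2))
  simp only [opConv_eq_fracInt_one_opConvDeriv (hT' ht) (smooth _) ht.1, fracInt_one]
    at lim_opConv
  rw [fracInt_one]
  exact tendsto_nhds_unique lim_opConv lim_integral

end Semivariation

section ClosedSubmodule

variable {E F : Type*} [NormedAddCommGroup E] [NormedSpace ℝ E] [NormedAddCommGroup F]
  [NormedSpace ℝ F]

lemma hasDerivWithinAt_mem_of_isClosed {p : Submodule ℝ E} (hp : IsClosed (p : Set E))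
    {φ : ℝ → E} {φ' : E} {s : Set ℝ} {t : ℝ} (hs : UniqueDiffWithinAt ℝ s t)
    (hφ : HasDerivWithinAt φ φ' s t) (hmem : ∀ τ ∈ s, φ τ ∈ p) : φ' ∈ p := by
  have in_closure : derivWithin φ s t ∈ closure (Submodule.span ℝ (φ '' s) : Set E) :=
    range_derivWithin_subset_closure_span_image φ ((inter_self s).symm ▸ subset_closure)
      (mem_range_self t)
  rw [hφ.derivWithin hs] at in_closure
  exact closure_minimal (Submodule.span_le.2 (image_subset_iff.2 hmem)) hp in_closure

variable [CompleteSpace E]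

lemma intervalIntegral_mem_of_isClosed {p : Submodule ℝ E} (hp : IsClosed (p : Set E)) {a b : ℝ}
    (hab : a ≤ b) {φ : ℝ → E} (hφ : IntervalIntegrable φ volume a b)
    (hmem : ∀ s ∈ Icc a b, φ s ∈ p) : ∫ s in a..b, φ s ∈ p := by
  have := hp
  rw [← p.ker_mkQ, LinearMap.mem_ker]
  have commute := p.mkQL.intervalIntegral_comp_comm hφ
  refine commute.symm.trans (intervalIntegral.integral_zero_ae (.of_forall fun s hs => ?_))
  rw [uIoc_of_le hab] at hs
  exact (Submodule.Quotient.mk_eq_zero p).2 (hmem s ⟨hs.1.le, hs.2⟩)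

variable [CompleteSpace F] {p : Submodule ℝ (E × F)} {φ : ℝ → E} {ψ : ℝ → F}

lemma prodMk_intervalIntegral_mem_of_isClosed (hp : IsClosed (p : Set (E × F))) {a b : ℝ}
    (hab : a ≤ b) (hφ : IntervalIntegrable φ volume a b) (hψ : IntervalIntegrable ψ volume a b)
    (hmem : ∀ s ∈ Icc a b, (φ s, ψ s) ∈ p) : (∫ s in a..b, φ s, ∫ s in a..b, ψ s) ∈ p := by
  have in_p := intervalIntegral_mem_of_isClosed hp hab (φ := fun s => (φ s, ψ s))
    ⟨hφ.1.prodMk hψ.1, hφ.2.prodMk hψ.2⟩ hmem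
  rw [intervalIntegral.integral_of_le hab] at in_p ⊢
  rw [intervalIntegral.integral_of_le hab]
  rwa [integral_pair hφ.1 hψ.1] at in_p

lemma prodMk_fracInt_mem_of_isClosed (hp : IsClosed (p : Set (E × F))) {b t : ℝ} (hb : 0 < b)
    (ht : 0 ≤ t) (hφ : ContinuousOn φ (Icc 0 t)) (hψ : ContinuousOn ψ (Icc 0 t))
    (hmem : ∀ s ∈ Icc 0 t, (φ s, ψ s) ∈ p) : (fracInt b φ t, fracInt b ψ t) ∈ p :=
  prodMk_intervalIntegral_mem_of_isClosed hp ht (intervalIntegrable_g_smul hb ht hφ)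
    (intervalIntegrable_g_smul hb ht hψ) fun s hs => p.smul_mem (g b (t - s)) (hmem s hs)

lemma prodMk_mem_of_fracInt_one_mem (hp : IsClosed (p : Set (E × F))) {r : ℝ} (hr : 0 < r)
    (hφ : ContinuousOn φ (Icc 0 r)) (hψ : ContinuousOn ψ (Icc 0 r))
    (hmem : ∀ t ∈ Icc 0 r, (fracInt 1 φ t, fracInt 1 ψ t) ∈ p) :
    ∀ t ∈ Icc 0 r, (φ t, ψ t) ∈ p := fun t ht =>
  hasDerivWithinAt_mem_of_isClosed hp (uniqueDiffOn_Icc hr t ht)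
    ((hasDerivWithinAt_fracInt_one hφ ht).prodMk (hasDerivWithinAt_fracInt_one hψ ht)) hmem

end ClosedSubmodule

section StrongSolution

variable {X : Type*} [NormedAddCommGroup X] [NormedSpace ℂ X] [CompleteSpace X] {α r : ℝ}
  {A : X →ₗ.[ℂ] X} {x y : X} {f u ψ : ℝ → X}

lemma hasDerivWithinAt_add_smul_add_fracInt (hα : 1 < α) (hψ : ContinuousOn ψ (Icc 0 r)) (x y : X)
    {t : ℝ} (ht : t ∈ Icc 0 r) :
    HasDerivWithinAt (fun t => x + t • y + fracInt α ψ t) (y + fracInt (α - 1) ψ t)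
      (Icc 0 r) t := by
  have hα' : 0 < α - 1 := sub_pos.2 hα
  have order : EqOn (fracInt α ψ) (fracInt 1 (fracInt (α - 1) ψ)) (Icc 0 r) := fun s hs => by
    rw [fracInt_fracInt one_pos hα' hs.1 (hψ.mono (Icc_subset_Icc_right hs.2)), add_sub_cancel]
  have affine : HasDerivWithinAt (fun t : ℝ => x + t • y) y (Icc 0 r) t := by
    simpa using (((hasDerivAt_id t).smul_const y).const_add x).hasDerivWithinAt
  exact affine.add ((hasDerivWithinAt_fracInt_one (continuousOn_fracInt hα' hψ) ht).congr
    order (order ht))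

theorem isStrongSolution_of_eq_add_fracInt (hα1 : 1 < α) (hα2 : α < 2) (hr : 0 ≤ r)
    (hf : ContinuousOn f (Icc 0 r)) (hψ : ContinuousOn ψ (Icc 0 r))
    (hu : ∀ t ∈ Icc 0 r, u t = x + t • y + fracInt α ψ t)
    (hAu : ∀ t ∈ Icc 0 r, (u t, ψ t - f t) ∈ A.graph) : IsStrongSolution α A r f x y u := by
  have hu' : ∀ t ∈ Icc 0 r, HasDerivWithinAt u (y + fracInt (α - 1) ψ t) (Icc 0 r) t :=
    fun t ht => (hasDerivWithinAt_add_smul_add_fracInt hα1 hψ x y ht).congr hu (hu t ht)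
  have hw : EqOn (fracInt (2 - α) fun s => u s - x - s • y) (fracInt 1 (fracInt 1 ψ)) (Icc 0 r) :=
    fun t ht => by
      have hψ' := hψ.mono (Icc_subset_Icc_right ht.2)
      calc fracInt (2 - α) (fun s => u s - x - s • y) t
          = fracInt (2 - α) (fracInt α ψ) t := fracInt_congr ht.1 fun s hs => by
            simp only [hu s ⟨hs.1, hs.2.trans ht.2⟩]
            abel
        _ = fracInt 1 (fracInt 1 ψ) t := by
            rw [fracInt_fracInt (sub_pos.2 hα2) (one_pos.trans hα1) ht.1 hψ',
              fracInt_fracInt one_pos one_pos ht.1 hψ', sub_add_cancel, one_add_one_eq_two]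
  refine ⟨fun t => ψ t - f t, fun t => y + fracInt (α - 1) ψ t, fracInt 1 ψ, ψ,
    fun t ht => (hu' t ht).continuousWithinAt, hAu, hψ.sub hf, hu',
    continuousOn_const.add (continuousOn_fracInt (sub_pos.2 hα1) hψ),
    fun t ht => (hasDerivWithinAt_fracInt_one (continuousOn_fracInt one_pos hψ) ht).congr
      hw (hw ht),
    fun t ht => hasDerivWithinAt_fracInt_one hψ ht, hψ, fun t _ => (sub_add_cancel _ _).symm,
    ?_, ?_⟩
  · simpa [fracInt_zero_right] using hu 0 ⟨le_rfl, hr⟩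
  · simp [fracInt_zero_right]

end StrongSolution

section ResolventFamily

variable {X : Type*} [NormedAddCommGroup X] [NormedSpace ℂ X] {α r t : ℝ}

lemma BoundedSemivariation.exists_semivariationLE {S : ℝ → X →L[ℂ] X}
    (hS : BoundedSemivariation S r) :
    ∃ C, SemivariationLE (fun s => (S s).restrictScalars ℝ) r C := hS

/-- `S` is an `α`-times resolvent family with generator `A`. Since `A` is only partially defined,
commutation with `A` and the resolvent equation are stated for pairs in its graph. -/
structure IsResolventFamily (α : ℝ) (A : X →ₗ.[ℂ] X) (S : ℝ → X →L[ℂ] X) : Prop where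
  continuousOn_apply (x : X) : ContinuousOn (fun t => S t x) (Ici 0)
  apply_zero : S 0 = 1
  apply_mem_graph {t : ℝ} (ht : 0 ≤ t) {x y : X} (hxy : (x, y) ∈ A.graph) :
    (S t x, S t y) ∈ A.graph
  apply_eq_add_fracInt {t : ℝ} (ht : 0 ≤ t) {x y : X} (hxy : (x, y) ∈ A.graph) :
    S t x = x + fracInt α (fun s => S s y) t

namespace IsResolventFamily

variable {A : X →ₗ.[ℂ] X} {S : ℝ → X →L[ℂ] X} {x y : X} {f k : ℝ → X}

lemma continuousOn_Icc (hS : IsResolventFamily α A S) (x : X) (t : ℝ) :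
    ContinuousOn (fun s => S s x) (Icc 0 t) :=
  (hS.continuousOn_apply x).mono Icc_subset_Ici_self

variable [CompleteSpace X]

lemma continuousOn_uncurry (hS : IsResolventFamily α A S) (t : ℝ) :
    ContinuousOn (uncurry fun s => ⇑(S s)) (Icc 0 t ×ˢ univ) :=
  continuousOn_uncurry_of_continuousOn_apply (T := fun s => (S s).restrictScalars ℝ)
    (hS.continuousOn_Icc · t)

lemma fracInt_one_apply_eq (hS : IsResolventFamily α A S) (hα : 0 < α) (ht : 0 ≤ t)
    (hxy : (x, y) ∈ A.graph) :
    fracInt 1 (fun s => S s x) t = t • x + fracInt α (fracInt 1 fun s => S s y) t := by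
  have hSy := hS.continuousOn_Icc y t
  calc fracInt 1 (fun s => S s x) t
      = fracInt 1 (fun s => x + fracInt α (fun s => S s y) s) t :=
        fracInt_congr ht fun s hs => hS.apply_eq_add_fracInt hs.1 hxy
    _ = t • x + fracInt 1 (fracInt α fun s => S s y) t := by
        rw [fracInt_add one_pos ht continuousOn_const (continuousOn_fracInt hα hSy)]
        simp [fracInt_one]
    _ = t • x + fracInt α (fracInt 1 fun s => S s y) t := by
        rw [fracInt_fracInt one_pos hα ht hSy, fracInt_fracInt hα one_pos ht hSy, add_comm 1]

lemma opConv_Pa_eq_fracInt (hS : IsResolventFamily α A S) (hα : 1 < α) (ht : 0 ≤ t)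
    (hf : ContinuousOn f (Icc 0 t)) (hk : ContinuousOn k (Icc 0 t))
    (hSf : ∀ s ∈ Icc 0 t, opConv (fun s => S s) f s = fracInt 1 k s) :
    opConv (Pa α S) f t = fracInt α k t := by
  calc opConv (Pa α S) f t
      = fracInt (α - 1) (opConv (fun s => S s) f) t :=
        opConv_fracInt_left (hS.continuousOn_uncurry t) hf (sub_pos.2 hα) ht
    _ = fracInt (α - 1) (fracInt 1 k) t := fracInt_congr ht hSf
    _ = fracInt α k t := by rw [fracInt_fracInt (sub_pos.2 hα) one_pos ht hk, sub_add_cancel]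

lemma fracInt_one_apply_mem_graph (hS : IsResolventFamily α A S)
    (hA : IsClosed (A.graph : Set (X × X))) (ht : 0 ≤ t) (hxy : (x, y) ∈ A.graph) :
    (fracInt 1 (fun s => S s x) t, fracInt 1 (fun s => S s y) t) ∈ A.graph :=
  prodMk_fracInt_mem_of_isClosed (p := A.graph.restrictScalars ℝ) hA one_pos ht
    (hS.continuousOn_Icc x t) (hS.continuousOn_Icc y t) fun _ hs => hS.apply_mem_graph hs.1 hxy

lemma fracInt_apply_mem_graph (hS : IsResolventFamily α A S) (hα : 0 < α)
    (hA : IsClosed (A.graph : Set (X × X))) (hdense : Dense (A.domain : Set X)) (ht : 0 ≤ t)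
    (z : X) : (fracInt α (fun s => S s z) t, S t z - z) ∈ A.graph := by
  obtain ⟨J, hJ⟩ := exists_continuousLinearMap_eq_fracInt
    (T := fun s => (S s).restrictScalars ℝ) hα ht (hS.continuousOn_Icc · t)
  have closed : IsClosed {z | (J z, S t z - z) ∈ A.graph} := hA.preimage (by fun_prop)
  rw [← show J z = fracInt α (fun s => S s z) t from hJ z]
  refine closed.closure_subset_iff.2 (fun z hz => ?_) (hdense z)
  have hzAz := A.mem_graph ⟨z, hz⟩
  rw [mem_ofPred, hJ, hS.apply_eq_add_fracInt ht hzAz, add_sub_cancel_left]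
  exact prodMk_fracInt_mem_of_isClosed (p := A.graph.restrictScalars ℝ) hA hα ht
    (hS.continuousOn_Icc _ t) (hS.continuousOn_Icc _ t) fun _ hs => hS.apply_mem_graph hs.1 hzAz

lemma fracInt_opConv_mem_graph (hS : IsResolventFamily α A S) (hα : 0 < α)
    (hA : IsClosed (A.graph : Set (X × X))) (hdense : Dense (A.domain : Set X)) (ht : 0 ≤ t)
    (hf : ContinuousOn f (Icc 0 t)) :
    (fracInt α (opConv (fun s => S s) f) t, opConv (fun s => S s) f t - fracInt 1 f t) ∈
      A.graph := by
  have hSf : IntervalIntegrable (fun s => S (t - s) (f s)) volume 0 t :=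
    (continuousOn_apply_sub (hS.continuousOn_uncurry t) hf).intervalIntegrable_of_Icc ht
  have hJf : IntervalIntegrable (fun s => fracInt α (fun τ => S τ (f s)) (t - s)) volume 0 t :=
    (continuousOn_apply_sub (continuousOn_uncurry_fracInt_apply
      (T := fun s => (S s).restrictScalars ℝ) hα (hS.continuousOn_Icc · t))
      hf).intervalIntegrable_of_Icc ht
  have hf' : IntervalIntegrable f volume 0 t := hf.intervalIntegrable_of_Icc ht
  rw [← opConv_fracInt_left (hS.continuousOn_uncurry t) hf hα ht, fracInt_one, opConv, opConv,
    ← intervalIntegral.integral_sub hSf hf']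
  exact prodMk_intervalIntegral_mem_of_isClosed (p := A.graph.restrictScalars ℝ) hA ht hJf
    (hSf.sub hf') fun s hs => hS.fracInt_apply_mem_graph hα hA hdense (sub_nonneg.2 hs.2) (f s)

lemma fracInt_mem_graph_of_opConv_eq (hS : IsResolventFamily α A S) (hα : 0 < α)
    (hA : IsClosed (A.graph : Set (X × X))) (hdense : Dense (A.domain : Set X)) (hr : 0 < r)
    (hf : ContinuousOn f (Icc 0 r)) (hk : ContinuousOn k (Icc 0 r))
    (hSf : ∀ t ∈ Icc 0 r, opConv (fun s => S s) f t = fracInt 1 k t) :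
    ∀ t ∈ Icc 0 r, (fracInt α k t, k t - f t) ∈ A.graph := by
  refine prodMk_mem_of_fracInt_one_mem (p := A.graph.restrictScalars ℝ) hA hr
    (continuousOn_fracInt hα hk) (hk.sub hf) fun t ht => ?_
  have hsub : Icc 0 t ⊆ Icc 0 r := Icc_subset_Icc_right ht.2
  have swap : fracInt 1 (fracInt α k) t = fracInt α (opConv (fun s => S s) f) t := by
    rw [fracInt_congr ht.1 fun s hs => hSf s (hsub hs), fracInt_fracInt hα one_pos ht.1
      (hk.mono hsub), fracInt_fracInt one_pos hα ht.1 (hk.mono hsub), add_comm]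
  have difference : fracInt 1 (fun s => k s - f s) t =
      opConv (fun s => S s) f t - fracInt 1 f t := by
    rw [hSf t ht, eq_sub_iff_add_eq, ← fracInt_add (φ := fun s => k s - f s) one_pos ht.1
      ((hk.sub hf).mono hsub) (hf.mono hsub)]
    simp only [sub_add_cancel]
  have in_graph := hS.fracInt_opConv_mem_graph hα hA hdense ht.1 (hf.mono hsub)
  rwa [← swap, ← difference] at in_graph

theorem isStrongSolution (hS : IsResolventFamily α A S) (hα1 : 1 < α) (hα2 : α < 2)
    (hA : IsClosed (A.graph : Set (X × X))) (hdense : Dense (A.domain : Set X)) (hr : 0 < r)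
    {x y Ax Ay : X} (hx : (x, Ax) ∈ A.graph) (hy : (y, Ay) ∈ A.graph)
    (hf : ContinuousOn f (Icc 0 r)) (hk : ContinuousOn k (Icc 0 r))
    (hSf : ∀ t ∈ Icc 0 r, opConv (fun s => S s) f t = fracInt 1 k t) :
    IsStrongSolution α A r f x y
      fun t => S t x + fracInt 1 (fun s => S s y) t + opConv (Pa α S) f t := by
  have hα : 0 < α := one_pos.trans hα1
  have hSAx := hS.continuousOn_Icc Ax r
  have hJSAy : ContinuousOn (fracInt 1 fun s => S s Ay) (Icc 0 r) :=
    continuousOn_fracInt one_pos (hS.continuousOn_Icc Ay r)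
  have duhamel : ∀ t ∈ Icc 0 r, opConv (Pa α S) f t = fracInt α k t := fun t ht =>
    have hsub := Icc_subset_Icc_right ht.2
    hS.opConv_Pa_eq_fracInt hα1 ht.1 (hf.mono hsub) (hk.mono hsub) fun s hs => hSf s (hsub hs)
  refine isStrongSolution_of_eq_add_fracInt
    (ψ := fun t => S t Ax + fracInt 1 (fun s => S s Ay) t + k t) hα1 hα2 hr.le hf
    ((hSAx.add hJSAy).add hk) (fun t ht => ?_) fun t ht => ?_
  · have hsub : Icc 0 t ⊆ Icc 0 r := Icc_subset_Icc_right ht.2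
    rw [fracInt_add (φ := fun t => S t Ax + fracInt 1 (fun s => S s Ay) t) hα ht.1
        ((hSAx.add hJSAy).mono hsub) (hk.mono hsub),
      fracInt_add hα ht.1 (hSAx.mono hsub) (hJSAy.mono hsub), duhamel t ht,
      hS.apply_eq_add_fracInt ht.1 hx, hS.fracInt_one_apply_eq hα ht.1 hy]
    abel
  · rw [duhamel t ht, add_sub_assoc]
    exact A.graph.add_mem (A.graph.add_mem (hS.apply_mem_graph ht.1 hx)
      (hS.fracInt_one_apply_mem_graph hA ht.1 hy))
      (hS.fracInt_mem_graph_of_opConv_eq hα hA hdense hr hf hk hSf t ht)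

end IsResolventFamily

end ResolventFamily

theorem stmt_14
    {X : Type*} [NormedAddCommGroup X] [NormedSpace ℂ X] [CompleteSpace X]
    (α : ℝ) (hα1 : 1 < α) (hα2 : α < 2)
    (A : X →ₗ.[ℂ] X) (hA_closed : IsClosed (A.graph : Set (X × X)))
    (hA_dense : Dense (A.domain : Set X))
    (S : ℝ → X →L[ℂ] X)
    (hS_cont : ∀ x : X, ContinuousOn (fun t => S t x) (Ici (0:ℝ)))
    (hS_zero : S 0 = 1)
    (hS_dom : ∀ t : ℝ, 0 ≤ t → ∀ x ∈ A.domain, S t x ∈ A.domain)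
    (hS_comm : ∀ t : ℝ, 0 ≤ t → ∀ x y : X, (x, y) ∈ A.graph → (S t x, S t y) ∈ A.graph)
    (hS_eq : ∀ t : ℝ, 0 ≤ t → ∀ x y : X, (x, y) ∈ A.graph →
      S t x = x + ∫ s in (0:ℝ)..t, g α (t - s) • S s y)
    (r : ℝ) (hr : 0 < r) (hsv : BoundedSemivariation S r) :
    ∀ x ∈ A.domain, ∀ y ∈ A.domain, ∀ f : ℝ → X, ContinuousOn f (Icc 0 r) →
      IsStrongSolution α A r f x y
        (fun t => S t x + (∫ s in (0:ℝ)..t, S s y) +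
          ∫ s in (0:ℝ)..t, Pa α S (t - s) (f s)) := by
  intro x hx y hy f hf
  have hS : IsResolventFamily α A S :=
    ⟨hS_cont, hS_zero, fun ht _ _ => hS_comm _ ht _ _, fun ht _ _ => hS_eq _ ht _ _⟩
  obtain ⟨C, hC⟩ := hsv.exists_semivariationLE
  obtain ⟨k, hk, hSf⟩ := exists_continuousOn_opConv_eq_fracInt_one (hS.continuousOn_Icc · r) hC hf
  simpa only [fracInt_one, opConv] using hS.isStrongSolution hα1 hα2 hA_closed hA_dense hr
    (A.mem_graph ⟨x, hx⟩) (A.mem_graph ⟨y, hy⟩) hf hk hSf
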